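/- Let K be obtained from a SET graph K⁻ by adding a new vertex z adjacent to one odd-degree vertex and one even-degree vertex of K⁻, and let n = |V(K)|. Then K admits a path decomposition D with D(z) ≥ 2 and |D| ≤ ⌈n/2⌉. -/

import Mathlib

open SimpleGraph

variable {V : Type*}

/-- A path decomposition of a simple graph `G`: a list of nontrivial paths of `G`
that are pairwise edge-disjoint and together cover every edge of `G`. -/
structure PathDecomp (G : SimpleGraph V) where
  paths : List (Σ a b : V, G.Walk a b)
  nontrivial : ∀ p ∈ paths, 0 < p.2.2.length
  isPath : ∀ p ∈ paths, p.2.2.IsPath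
  edgeDisjoint : paths.Pairwise fun p q => ∀ e, e ∈ p.2.2.edges → e ∉ q.2.2.edges
  covers : ∀ e ∈ G.edgeSet, ∃ p ∈ paths, e ∈ p.2.2.edges

/-- Cardinality of a path decomposition. -/
def pdCard {G : SimpleGraph V} (D : PathDecomp G) : ℕ := D.paths.length

/-- `ends D u` is the number of paths in `D` having `u` as an end vertex. -/
def ends [DecidableEq V] {G : SimpleGraph V} (D : PathDecomp G) (u : V) : ℕ :=
  (D.paths.filter fun p => p.1 = u ∨ p.2.1 = u).length

/-- The path number: minimum cardinality of a path decomposition. -/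
noncomputable def pn (G : SimpleGraph V) : ℕ :=
  sInf {n | ∃ D : PathDecomp G, pdCard D = n}

/-- Degree as the `ncard` of the neighbor set (no decidability needed). -/
noncomputable def ndeg (G : SimpleGraph V) (v : V) : ℕ := {w | G.Adj v w}.ncard

/-- A SET graph: the set of even-degree vertices consists of exactly three
mutually adjacent vertices, and every odd-degree vertex has at least two
even-degree neighbors. -/
def IsSETGraph (G : SimpleGraph V) : Prop :=
  (∃ a b c : V, a ≠ b ∧ a ≠ c ∧ b ≠ c ∧
      {v : V | Even (ndeg G v)} = {a, b, c} ∧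
      G.Adj a b ∧ G.Adj a c ∧ G.Adj b c) ∧
  ∀ v : V, Odd (ndeg G v) →
    ∃ w₁ w₂ : V, w₁ ≠ w₂ ∧ G.Adj v w₁ ∧ G.Adj v w₂ ∧
      Even (ndeg G w₁) ∧ Even (ndeg G w₂)

/-!
Suppose that `ab` is an edge of `G` and that, in a path decomposition of `G - ab`, some path ends at
each neighbor of `a` in `G`. Then `ab` can be inserted so that one path end moves from `b` to `a`
and no other end changes: extend a path ending at `b` to `a`; if it already visits `a`, drop the
edge `xa` by which it reaches `a`, so that its end moves to `x`, and go on with `xa` in place of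
`ab`. Deleting edges and inserting them again in this way gives Lovász's theorem that a graph
whose vertices of positive even degree are among two nonadjacent vertices has a decomposition with
one path end at each odd vertex and two at a chosen one of these two.

In the theorem, let `b` and `c` be the even vertices of `K - z` other than `y`. By Lovász's theorem,
`K - z - yb` has a decomposition with one path end at each odd vertex, among them `x`, `y` and `b`,
and at most two at `c`. Inserting `yb`, `zy` and `zx` moves path ends from `b` to `y`, from `y` to
`z` and from `x` to `z`. Then two paths end at `z`, none at `b` or `x`, at most two at `c`, and at
most one elsewhere, so there are at most `n` path ends.
-/

section Lists

/-- The edges of the path visiting the vertices of a list in order. -/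
def pathEdges (l : List V) : Multiset (Sym2 V) := (l.zipWith (s(·, ·)) l.tail : List (Sym2 V))

/-- The two end vertices of the path visiting the vertices of a list in order, with multiplicity:
a one-vertex list has its vertex as an end twice. -/
def pathEnds (l : List V) : Multiset V := (l.head?.toList ++ l.getLast?.toList : List V)

theorem pathEdges_cons_cons (a b : V) (l : List V) :
    pathEdges (a :: b :: l) = s(a, b) ::ₘ pathEdges (b :: l) :=
  rfl

theorem pathEdges_append (l r : List V) (x y : V) :
    pathEdges (l ++ x :: y :: r) = pathEdges (l ++ [x]) + s(x, y) ::ₘ pathEdges (y :: r) := by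
  induction l with
  | nil => simp [pathEdges]
  | cons a l ih =>
    cases l with
    | nil => simp [pathEdges]
    | cons c l =>
      simp only [List.cons_append, pathEdges_cons_cons] at ih ⊢
      rw [ih, Multiset.cons_add]

theorem pathEdges_reverse (l : List V) : pathEdges l.reverse = pathEdges l := by
  induction l with
  | nil => rfl
  | cons a l ih =>
    cases l with
    | nil => rfl
    | cons c l =>
      rw [List.reverse_cons] at ih
      rw [List.reverse_cons, List.reverse_cons, List.append_assoc, List.singleton_append,
        pathEdges_append, ih, pathEdges_cons_cons, Sym2.eq_swap, Multiset.add_cons,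
        show pathEdges [a] = 0 from rfl, add_zero]

theorem pathEnds_reverse (l : List V) : pathEnds l.reverse = pathEnds l := by
  simp only [pathEnds, List.head?_reverse, List.getLast?_reverse]
  exact Multiset.coe_eq_coe.2 List.perm_append_comm

theorem pathEdges_cons_append_cons {a b x : V} {l m r : List V} (hm : b :: l = m ++ [x]) :
    pathEdges (b :: l ++ a :: r) = s(a, x) ::ₘ (pathEdges (b :: l) + pathEdges (a :: r)) := by
  rw [hm, List.append_assoc, List.singleton_append, pathEdges_append, Sym2.eq_swap,
    Multiset.add_cons]

theorem cons_pathEnds_append (a b : V) (l r : List V) :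
    a ::ₘ pathEnds (b :: l ++ a :: r) = b ::ₘ pathEnds (a :: r) := by
  rw [pathEnds, pathEnds, List.getLast?_append_of_ne_nil _ (List.cons_ne_nil a r)]
  exact Multiset.cons_swap a b (a :: r).getLast?.toList

theorem mem_pathEnds_of_append {a b v : V} {l r : List V} (hvb : v ≠ b)
    (hv : v ∈ pathEnds (b :: l ++ a :: r)) : v ∈ pathEnds (a :: r) := by
  have hmem : v ∈ b ::ₘ pathEnds (a :: r) :=
    cons_pathEnds_append a b l r ▸ Multiset.mem_cons_of_mem hv
  exact (Multiset.mem_cons.1 hmem).resolve_left hvb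

theorem cons_pathEnds_cons_cons (a b : V) (l : List V) :
    b ::ₘ pathEnds (a :: b :: l) = a ::ₘ pathEnds (b :: l) :=
  cons_pathEnds_append b a [] l

theorem exists_perm_cons_of_mem_pathEnds {p : List V} {v : V} (hv : v ∈ pathEnds p) :
    ∃ t, (v :: t).Perm p ∧ pathEdges (v :: t) = pathEdges p ∧ pathEnds (v :: t) = pathEnds p := by
  simp only [pathEnds, Multiset.mem_coe, List.mem_append, Option.mem_toList] at hv
  rcases hv with hhead | hlast
  · obtain ⟨t, rfl⟩ := List.head?_eq_some_iff.1 hhead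
    exact ⟨t, .rfl, rfl, rfl⟩
  · rw [← List.head?_reverse] at hlast
    obtain ⟨t, ht⟩ := List.head?_eq_some_iff.1 hlast
    rw [← pathEdges_reverse p, ← pathEnds_reverse p, ht]
    exact ⟨t, ht ▸ p.reverse_perm, rfl, rfl⟩

variable [DecidableEq V]

/-- The list `q` may replace `p` when an edge at `a` is added to a family of paths: either `q`
visits the vertices of `p` and has no fewer ends at `a`, or `q` visits `a` besides the vertices of
`p`. -/
def IsReroute (a : V) (p q : List V) : Prop :=
  q.Perm p ∧ (pathEnds p).count a ≤ (pathEnds q).count a ∨ a ∉ p ∧ q.Perm (a :: p)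

namespace IsReroute

variable {a : V} {p q : List V}

theorem refl (a : V) (p : List V) : IsReroute a p p := .inl ⟨.rfl, le_rfl⟩

theorem congr_left {p' : List V} (h : IsReroute a p' q) (hperm : p'.Perm p)
    (hends : pathEnds p' = pathEnds p) : IsReroute a p q := by
  rw [IsReroute, ← hends, ← hperm.mem_iff]
  exact h.imp (.imp_left (·.trans hperm)) (.imp_right (·.trans (hperm.cons a)))

theorem nodup (h : IsReroute a p q) (hp : p.Nodup) : q.Nodup := by
  rcases h with ⟨hperm, -⟩ | ⟨ha, hperm⟩
  · exact hperm.nodup_iff.2 hp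
  · exact hperm.nodup_iff.2 (hp.cons ha)

theorem length_le (h : IsReroute a p q) : p.length ≤ q.length := by
  rcases h with ⟨hperm, -⟩ | ⟨-, hperm⟩ <;> simp [hperm.length_eq]

/-- If the path `b ⋯ x a ⋯` is cut at `xa` and its tail is rerouted, the two parts can be joined
again by the edge `ab`. -/
theorem exists_join {b x : V} {l m r : List V} (hab : a ≠ b) (hm : b :: l = m ++ [x])
    (h : IsReroute a (a :: r) q) :
    ∃ q', IsReroute a (b :: l ++ a :: r) q' ∧
      pathEdges q' = pathEdges (b :: l) + s(a, b) ::ₘ pathEdges q ∧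
      a ::ₘ pathEnds q' = x ::ₘ pathEnds q := by
  obtain ⟨hperm, hcount⟩ := h.resolve_right fun h => h.1 List.mem_cons_self
  have ha : a ∈ pathEnds q :=
    Multiset.count_pos.1 (hcount.trans_lt' (Multiset.count_pos.2 (by simp [pathEnds])))
  obtain ⟨r', hperm', hedges, hends⟩ := exists_perm_cons_of_mem_pathEnds ha
  have hrev : (b :: l).reverse = x :: m.reverse := by simp [hm]
  have hends' : a ::ₘ pathEnds ((b :: l).reverse ++ a :: r') = x ::ₘ pathEnds q := by
    rw [hrev, cons_pathEnds_append, hends]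
  refine ⟨(b :: l).reverse ++ a :: r',
    .inl ⟨(b :: l).reverse_perm.append (hperm'.trans hperm), ?_⟩, ?_, hends'⟩
  · have hcount_old := congrArg (Multiset.count a) (cons_pathEnds_append a b l r)
    have hcount_new := congrArg (Multiset.count a) hends'
    simp only [Multiset.count_cons, if_true, if_neg hab] at hcount_old hcount_new
    omega
  · rw [← pathEdges_reverse (b :: l), ← hedges, List.reverse_cons, List.append_assoc,
      List.singleton_append, pathEdges_append, Sym2.eq_swap]

end IsReroute

/-- The family of paths `Q` arises from `P` by inserting the edge `ab` in such a way that one path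
end moves from `b` to `a` and every path is rerouted at `a`. -/
structure InsertsEdge (a b : V) (P Q : Multiset (List V)) : Prop where
  rel : Multiset.Rel (IsReroute a) P Q
  edges : Q.bind pathEdges = s(a, b) ::ₘ P.bind pathEdges
  ends : b ::ₘ Q.bind pathEnds = a ::ₘ P.bind pathEnds

namespace InsertsEdge

variable {a b : V} {P Q : Multiset (List V)}

theorem congr_left {p p' : List V} (h : InsertsEdge a b (p' ::ₘ P) Q) (hperm : p'.Perm p)
    (hedges : pathEdges p' = pathEdges p) (hends : pathEnds p' = pathEnds p) :
    InsertsEdge a b (p ::ₘ P) Q where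
  rel := by
    obtain ⟨q, Q, hq, hrel, rfl⟩ := Multiset.rel_cons_left.1 h.rel
    exact .cons (hq.congr_left hperm hends) hrel
  edges := by simpa only [Multiset.cons_bind, hedges] using h.edges
  ends := by simpa only [Multiset.cons_bind, hends] using h.ends

theorem of_notMem {t : List V} (ha : a ∉ b :: t) (P : Multiset (List V)) :
    InsertsEdge a b ((b :: t) ::ₘ P) ((a :: b :: t) ::ₘ P) where
  rel := .cons (.inr ⟨ha, .rfl⟩) (Multiset.rel_refl_of_refl_on fun p _ => .refl a p)
  edges := by simp only [Multiset.cons_bind, pathEdges_cons_cons, Multiset.cons_add]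
  ends := by
    simp only [Multiset.cons_bind, ← Multiset.cons_add, cons_pathEnds_cons_cons]

theorem exists_join {x : V} {l m r : List V} (h : InsertsEdge a x ((a :: r) ::ₘ P) Q)
    (hab : a ≠ b) (hm : b :: l = m ++ [x]) :
    ∃ Q', InsertsEdge a b ((b :: l ++ a :: r) ::ₘ P) Q' := by
  obtain ⟨q, Q, hq, hrel, rfl⟩ := Multiset.rel_cons_left.1 h.rel
  obtain ⟨q', hq', hedges, hends⟩ := hq.exists_join hab hm
  have hQedges := h.edges
  have hQends := h.ends
  rw [Multiset.cons_bind, Multiset.cons_bind] at hQedges hQends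
  refine ⟨q' ::ₘ Q, .cons hq' hrel, ?_, ?_⟩
  · rw [Multiset.cons_bind, Multiset.cons_bind, hedges, pathEdges_cons_append_cons hm, add_assoc,
      Multiset.cons_add, hQedges, Multiset.cons_add, add_assoc, Multiset.add_cons,
      Multiset.add_cons]
  · rw [Multiset.cons_bind, Multiset.cons_bind, ← Multiset.cons_add a, cons_pathEnds_append,
      Multiset.cons_add, Multiset.cons_inj_right, ← Multiset.cons_inj_right a, ← hQends,
      ← Multiset.cons_add, hends, Multiset.cons_add]

end InsertsEdge

theorem exists_insertsEdge {a b : V} {P : Multiset (List V)} (hab : a ≠ b)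
    (hE : (P.bind pathEdges).Nodup) (habE : s(a, b) ∉ P.bind pathEdges)
    (hb : b ∈ P.bind pathEnds)
    (hN : ∀ v, s(a, v) ∈ P.bind pathEdges → v ∈ P.bind pathEnds) :
    ∃ Q, InsertsEdge a b P Q := by
  induction hn : (P.bind pathEdges).card using Nat.strong_induction_on generalizing P b with
  | _ n ih =>
  obtain ⟨p, hp, hbp⟩ := Multiset.mem_bind.1 hb
  obtain ⟨P, rfl⟩ := Multiset.exists_cons_of_mem hp
  obtain ⟨t, hperm, hedges, hends⟩ := exists_perm_cons_of_mem_pathEnds hbp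
  suffices ∃ Q, InsertsEdge a b ((b :: t) ::ₘ P) Q from
    this.imp fun Q h => h.congr_left hperm hedges hends
  simp only [Multiset.cons_bind, ← hedges, ← hends] at hE habE hN hn
  by_cases ha : a ∈ t
  · -- Trading the edge `xa` of the path `b ⋯ x a ⋯` for `ab` moves its end from `b` to `x`; then
    -- `xa` remains to be inserted, and the piece `b ⋯ x` can be set aside.
    obtain ⟨l, r, rfl, hal⟩ := List.eq_append_cons_of_mem ha
    obtain ⟨m, x, hm⟩ := (List.eq_nil_or_concat' (b :: l)).resolve_left (List.cons_ne_nil b l)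
    have hax : a ≠ x := by
      have : x ∈ b :: l := by simp [hm]
      grind
    rw [← List.cons_append, pathEdges_cons_append_cons hm, Multiset.cons_add, add_assoc,
      ← Multiset.cons_bind] at hE habE hN hn
    rw [← List.cons_append]
    have hN' : ∀ v, s(a, v) ∈ s(a, x) ::ₘ (pathEdges (b :: l) + ((a :: r) ::ₘ P).bind pathEdges) →
        v ∈ ((a :: r) ::ₘ P).bind pathEnds := by
      intro v hv
      have hvb : v ≠ b := by
        rintro rfl
        exact habE hv
      rw [Multiset.cons_bind, Multiset.mem_add]
      exact (Multiset.mem_add.1 (hN v hv)).imp_left (mem_pathEnds_of_append hvb)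
    obtain ⟨hxE, hE⟩ := Multiset.nodup_cons.1 hE
    obtain ⟨Q, hQ⟩ := ih _ (by simp [← hn]) hax
      (Multiset.nodup_add.1 hE).2.1 (fun h => hxE (Multiset.mem_add.2 (.inr h)))
      (hN' x (Multiset.mem_cons_self _ _))
      (fun v hv => hN' v (Multiset.mem_cons_of_mem (Multiset.mem_add.2 (.inr hv)))) rfl
    exact hQ.exists_join hab hm
  · exact ⟨_, .of_notMem (by simp [hab, ha]) P⟩

end Lists

section Walks

variable {G : SimpleGraph V}

theorem isChain_adj_of_pathEdges {p : List V} (h : ∀ e ∈ pathEdges p, e ∈ G.edgeSet) :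
    p.IsChain G.Adj := by
  induction p with
  | nil => exact .nil
  | cons a p ih =>
    cases p with
    | nil => exact .singleton a
    | cons b p =>
      rw [pathEdges_cons_cons, Multiset.forall_mem_cons] at h
      exact .cons_cons h.1 (ih h.2)

theorem exists_walk {p : List V} (hp : p.Nodup ∧ 2 ≤ p.length)
    (hE : ∀ e ∈ pathEdges p, e ∈ G.edgeSet) :
    ∃ w : Σ a b : V, G.Walk a b, (0 < w.2.2.length ∧ w.2.2.IsPath) ∧
      w.2.2.edges = pathEdges p ∧ ([w.1, w.2.1] : Multiset V) = pathEnds p := by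
  have hne : p ≠ [] := List.ne_nil_of_length_pos (by omega)
  refine ⟨⟨_, _, .ofSupport p hne (isChain_adj_of_pathEdges hE)⟩, ⟨?_, ?_⟩, ?_, ?_⟩
  · rw [Walk.length_ofSupport]
    omega
  · rw [Walk.isPath_def, Walk.support_ofSupport]
    exact hp.1
  · rw [Walk.edges_eq_zipWith_support, Walk.support_ofSupport, pathEdges]
  · rw [pathEnds, List.head?_eq_some_head hne, List.getLast?_eq_some_getLast hne]
    rfl

theorem exists_walks {P : Multiset (List V)} (hP : ∀ p ∈ P, p.Nodup ∧ 2 ≤ p.length)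
    (hE : ∀ e ∈ P.bind pathEdges, e ∈ G.edgeSet) :
    ∃ W : List (Σ a b : V, G.Walk a b), (∀ w ∈ W, 0 < w.2.2.length ∧ w.2.2.IsPath) ∧
      (W.flatMap fun w => w.2.2.edges) = P.bind pathEdges ∧
      (W.flatMap fun w => [w.1, w.2.1] : Multiset V) = P.bind pathEnds := by
  induction P using Multiset.induction with
  | empty => exact ⟨[], by simp⟩
  | cons p P ih =>
    rw [Multiset.forall_mem_cons] at hP
    simp only [Multiset.cons_bind, Multiset.mem_add, or_imp, forall_and] at hE
    obtain ⟨w, hw, hwedges, hwends⟩ := exists_walk hP.1 hE.1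
    obtain ⟨W, hW, hWedges, hWends⟩ := ih hP.2 hE.2
    refine ⟨w :: W, List.forall_mem_cons.2 ⟨hw, hW⟩, ?_, ?_⟩
    · rw [Multiset.cons_bind, ← hwedges, ← hWedges, List.flatMap_cons, Multiset.coe_add]
    · rw [Multiset.cons_bind, ← hwends, ← hWends, List.flatMap_cons, Multiset.coe_add]

theorem length_filter_ends_eq_count [DecidableEq V] {W : List (Σ a b : V, G.Walk a b)}
    (hW : ∀ w ∈ W, 0 < w.2.2.length ∧ w.2.2.IsPath) (v : V) :
    (W.filter fun w => w.1 = v ∨ w.2.1 = v).length =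
      (W.flatMap fun w => [w.1, w.2.1]).count v := by
  induction W with
  | nil => rfl
  | cons w W ih =>
    obtain ⟨⟨hlength, hpath⟩, hW⟩ := List.forall_mem_cons.1 hW
    have hne : w.1 ≠ w.2.1 :=
      mt hpath.nil_iff_eq.2 (Walk.not_nil_iff_lt_length.2 hlength)
    rw [List.flatMap_cons, List.count_append, ← ih hW]
    grind

theorem mem_cons_iff_mem_edgeSet {a b : V} {E : Multiset (Sym2 V)} (hab : G.Adj a b)
    (hE : ∀ e, e ∈ E ↔ e ∈ (G.deleteEdges {s(a, b)}).edgeSet) (e : Sym2 V) :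
    e ∈ s(a, b) ::ₘ E ↔ e ∈ G.edgeSet := by
  rw [Multiset.mem_cons, hE, edgeSet_deleteEdges, Set.mem_sdiff, Set.mem_singleton_iff]
  have : s(a, b) ∈ G.edgeSet := hab
  grind

end Walks

section Decompositions

variable [DecidableEq V] {G : SimpleGraph V} {f g : V → ℕ}

/-- The edges of `G` decompose into nontrivial paths, `f v` of which end at `v` for every vertex
`v`. Paths are encoded by their lists of vertices, which do not depend on `G`. -/
def HasPathDecomp (G : SimpleGraph V) (f : V → ℕ) : Prop :=
  ∃ P : Multiset (List V), (∀ p ∈ P, p.Nodup ∧ 2 ≤ p.length) ∧ (P.bind pathEdges).Nodup ∧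
    (∀ e, e ∈ P.bind pathEdges ↔ e ∈ G.edgeSet) ∧ ∀ v, (P.bind pathEnds).count v = f v

namespace HasPathDecomp

theorem congr (h : HasPathDecomp G f) (hfg : ∀ v, f v = g v) : HasPathDecomp G g :=
  funext hfg ▸ h

theorem bot : HasPathDecomp (⊥ : SimpleGraph V) fun _ => 0 :=
  ⟨0, by simp⟩

theorem add_edge {a b : V} (h : HasPathDecomp (G.deleteEdges {s(a, b)}) f) (hab : G.Adj a b) :
    HasPathDecomp G fun v => f v + if v = a ∨ v = b then 1 else 0 := by
  obtain ⟨P, hpath, hnodup, hedges, hends⟩ := h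
  have hbind : ([a, b] ::ₘ P).bind pathEdges = s(a, b) ::ₘ P.bind pathEdges := by
    rw [Multiset.cons_bind]
    exact Multiset.singleton_add _ _
  refine ⟨[a, b] ::ₘ P, Multiset.forall_mem_cons.2 ⟨by simp [hab.ne], hpath⟩, ?_, ?_, fun v => ?_⟩
  · rw [hbind, Multiset.nodup_cons, hedges]
    exact ⟨by simp, hnodup⟩
  · rw [hbind]
    exact mem_cons_iff_mem_edgeSet hab hedges
  · have hcount : (pathEnds [a, b]).count v = if v = a ∨ v = b then 1 else 0 := by
      have := hab.ne
      simp only [pathEnds, Multiset.coe_count]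
      grind
    rw [Multiset.cons_bind, Multiset.count_add, hends, hcount, add_comm]

/-- The decomposition is rerouted at `a`; this succeeds because each neighbor of `a` is the end of
some path. -/
theorem move_end {a b : V} (h : HasPathDecomp (G.deleteEdges {s(a, b)}) f) (hab : G.Adj a b)
    (hpos : ∀ v, G.Adj a v → 0 < f v)
    (hg : ∀ v, g v + (if v = b then 1 else 0) = f v + if v = a then 1 else 0) :
    HasPathDecomp G g := by
  obtain ⟨P, hpath, hnodup, hedges, hends⟩ := h
  have hmem : ∀ v, G.Adj a v → v ∈ P.bind pathEnds := fun v hv =>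
    Multiset.count_pos.1 (hends v ▸ hpos v hv)
  have hnotMem : s(a, b) ∉ P.bind pathEdges := by simp [hedges]
  obtain ⟨Q, hQ⟩ := exists_insertsEdge hab.ne hnodup hnotMem (hmem b hab) fun v hv =>
    hmem v (deleteEdges_le _ ((hedges _).1 hv))
  refine ⟨Q, fun q hq => ?_, hQ.edges ▸ Multiset.nodup_cons.2 ⟨hnotMem, hnodup⟩,
    hQ.edges ▸ mem_cons_iff_mem_edgeSet hab hedges, fun v => ?_⟩
  · obtain ⟨p, hp, hpq⟩ := Multiset.exists_mem_of_rel_of_mem (Multiset.rel_flip.2 hQ.rel) hq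
    exact ⟨hpq.nodup (hpath p hp).1, (hpath p hp).2.trans hpq.length_le⟩
  · have hcount := congrArg (Multiset.count v) hQ.ends
    rw [Multiset.count_cons, Multiset.count_cons, hends] at hcount
    exact Nat.add_right_cancel (hcount.trans (hg v).symm)

theorem exists_pathDecomp [Fintype V] (h : HasPathDecomp G f) :
    ∃ D : PathDecomp G, (∀ v, ends D v = f v) ∧ 2 * pdCard D = ∑ v, f v := by
  obtain ⟨P, hpath, hnodup, hedges, hends⟩ := h
  obtain ⟨W, hW, hWedges, hWends⟩ := exists_walks hpath fun e he => (hedges e).1 he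
  rw [← hWedges, Multiset.coe_nodup] at hnodup
  simp only [← hWedges, Multiset.mem_coe] at hedges
  simp only [← hWends, Multiset.coe_count] at hends
  refine ⟨⟨W, fun w hw => (hW w hw).1, fun w hw => (hW w hw).2,
    (List.nodup_flatMap.1 hnodup).2, fun e he => List.mem_flatMap.1 ((hedges e).2 he)⟩,
    fun v => (length_filter_ends_eq_count hW v).trans (hends v), ?_⟩
  calc 2 * W.length = (W.flatMap fun w => [w.1, w.2.1]).length := by
        simp [List.length_flatMap, mul_comm]
    _ = ∑ v, (W.flatMap fun w => [w.1, w.2.1]).count v := by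
        simp only [← Multiset.coe_card, ← Multiset.coe_count,
          Multiset.sum_count_eq_card fun v _ => Finset.mem_univ v]
    _ = ∑ v, f v := Finset.sum_congr rfl fun v _ => hends v

end HasPathDecomp

end Decompositions

section Degrees

variable {G : SimpleGraph V} {a b v : V}

theorem ndeg_pos_iff [Finite V] : 0 < ndeg G v ↔ ∃ w, G.Adj v w :=
  Set.ncard_pos

theorem ndeg_pos_of_adj [Finite V] (hab : G.Adj a b) : 0 < ndeg G a :=
  ndeg_pos_iff.2 ⟨b, hab⟩

theorem deleteEdges_singleton_lt (hab : G.Adj a b) : G.deleteEdges {s(a, b)} < G :=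
  lt_of_le_of_ne (deleteEdges_le _) fun h => by
    have : (G.deleteEdges {s(a, b)}).Adj a b := h.symm ▸ hab
    simp at this

theorem ndeg_deleteEdges_of_ne (ha : v ≠ a) (hb : v ≠ b) :
    ndeg (G.deleteEdges {s(a, b)}) v = ndeg G v := by
  have : ∀ w, (G.deleteEdges {s(a, b)}).Adj v w ↔ G.Adj v w := by
    simp only [deleteEdges_adj, Set.mem_singleton_iff]
    grind
  simp only [ndeg, this]

theorem ndeg_deleteEdges_left [Finite V] (hab : G.Adj a b) :
    ndeg (G.deleteEdges {s(a, b)}) a + 1 = ndeg G a := by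
  have : {w | (G.deleteEdges {s(a, b)}).Adj a w} = {w | G.Adj a w} \ {b} := by
    ext w
    simp only [deleteEdges_adj, Set.mem_singleton_iff, Set.mem_ofPred_eq, Set.mem_sdiff]
    grind
  rw [ndeg, this]
  exact Set.ncard_sdiff_singleton_add_one hab

theorem ndeg_deleteEdges_add [Finite V] [DecidableEq V] (hab : G.Adj a b) (v : V) :
    ndeg (G.deleteEdges {s(a, b)}) v + (if v = a ∨ v = b then 1 else 0) = ndeg G v := by
  by_cases ha : v = a
  · rw [ha, if_pos (.inl rfl), ndeg_deleteEdges_left hab]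
  by_cases hb : v = b
  · rw [hb, if_pos (.inr rfl), Sym2.eq_swap, ndeg_deleteEdges_left hab.symm]
  · rw [if_neg (not_or.2 ⟨ha, hb⟩), ndeg_deleteEdges_of_ne ha hb, add_zero]

end Degrees

section Lovasz

/-- The vertex `v` has positive even degree: these are the vertices at which a decomposition of the
kind considered by Lovász may fail to have a path end. -/
def HasPosEvenDegree (G : SimpleGraph V) (v : V) : Prop := Even (ndeg G v) ∧ 0 < ndeg G v

variable [DecidableEq V]

/-- The numbers of path ends in a decomposition with one path ending at each odd vertex and two
paths ending at the preferred vertex `u`, provided its degree is positive and even. -/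
noncomputable def lovaszEnds (G : SimpleGraph V) (u w : V) : ℕ :=
  if w = u ∧ Even (ndeg G w) then min 2 (ndeg G w) else ndeg G w % 2

/-- Lovász's decomposition property, strengthened for induction: as soon as the vertices of positive
even degree are among two nonadjacent vertices `u` and `v`, there is a path decomposition in which
each odd vertex is an end once and `u` is an end twice. The cases that at most one vertex has
positive even degree are included by taking `u = v`. -/
def LovaszDecomposable (G : SimpleGraph V) : Prop :=
  ∀ u v, ¬G.Adj u v → (∀ w, HasPosEvenDegree G w → w = u ∨ w = v) →
    (HasPosEvenDegree G v → HasPosEvenDegree G u) → HasPathDecomp G (lovaszEnds G u)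

variable [Finite V] {G : SimpleGraph V}

theorem hasPathDecomp_of_one_lt_ndeg (ih : ∀ H < G, LovaszDecomposable H)
    {a b : V} (hab : G.Adj a b) (hb : 1 < ndeg G b)
    (h : ∀ w, HasPosEvenDegree G w → w = a) : HasPathDecomp G (lovaszEnds G a) := by
  -- The degree of `b` in `G - ab` is even, so two paths can end at `b`; one of these ends is moved
  -- to `a`.
  have hdeg := ndeg_deleteEdges_add hab
  have hpos : ∀ v, G.Adj a v → v ≠ a ∧ 0 < ndeg G v := fun v hv =>
    ⟨hv.ne', ndeg_pos_of_adj hv.symm⟩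
  refine (ih _ (deleteEdges_singleton_lt hab) b a (by simp) (fun w hw => ?_) fun ha => ?_).move_end
    hab (fun v hv => ?_) fun v => ?_
  all_goals
    simp only [HasPosEvenDegree, lovaszEnds, Nat.even_iff] at *
    grind

theorem hasPathDecomp_of_ndeg_eq_one (ih : ∀ H < G, LovaszDecomposable H)
    {a b : V} (hab : G.Adj a b) (ha : Odd (ndeg G a) → ndeg G a = 1) (hb : ndeg G b = 1)
    (h : ∀ w, HasPosEvenDegree G w → w = a) : HasPathDecomp G (lovaszEnds G a) := by
  have hdeg := ndeg_deleteEdges_add hab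
  have hne := hab.ne
  refine ((ih _ (deleteEdges_singleton_lt hab) a a (by simp) (fun w hw => ?_) id).add_edge
    hab).congr fun v => ?_
  all_goals
    simp only [HasPosEvenDegree, lovaszEnds, Nat.even_iff, Nat.odd_iff] at *
    grind

theorem hasPathDecomp_of_unique_posEven (ih : ∀ H < G, LovaszDecomposable H) {u : V}
    (h : ∀ w, HasPosEvenDegree G w → w = u) : HasPathDecomp G (lovaszEnds G u) := by
  by_cases hu : HasPosEvenDegree G u
  · obtain ⟨w, hw⟩ := ndeg_pos_iff.1 hu.2
    rcases Nat.eq_or_lt_of_le (ndeg_pos_of_adj hw.symm) with hw1 | hw1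
    · exact hasPathDecomp_of_ndeg_eq_one ih hw (fun hodd => (Nat.not_even_iff_odd.2 hodd hu.1).elim)
        hw1.symm h
    · exact hasPathDecomp_of_one_lt_ndeg ih hw hw1 h
  have hnone : ∀ a w, HasPosEvenDegree G w → w = a := fun a w hw => absurd (h w hw ▸ hw) hu
  rcases eq_or_ne G ⊥ with rfl | hG
  · refine HasPathDecomp.bot.congr fun v => ?_
    simp [lovaszEnds, ndeg]
  obtain ⟨p, q, hpq⟩ := ne_bot_iff_exists_adj.1 hG
  have key : ∀ a, HasPathDecomp G (lovaszEnds G a) → HasPathDecomp G (lovaszEnds G u) :=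
    fun a ha => ha.congr fun v => by
      simp only [HasPosEvenDegree, lovaszEnds, Nat.even_iff] at *
      grind
  rcases Nat.eq_or_lt_of_le (ndeg_pos_of_adj hpq.symm) with hq1 | hq1
  · rcases Nat.eq_or_lt_of_le (ndeg_pos_of_adj hpq) with hp1 | hp1
    · exact key p (hasPathDecomp_of_ndeg_eq_one ih hpq (fun _ => hp1.symm) hq1.symm (hnone p))
    · exact key q (hasPathDecomp_of_one_lt_ndeg ih hpq.symm hp1 (hnone q))
  · exact key p (hasPathDecomp_of_one_lt_ndeg ih hpq hq1 (hnone p))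

theorem hasPathDecomp_of_even_adj (ih : ∀ H < G, LovaszDecomposable H)
    {y b c : V} (hyb : G.Adj y b) (hy : Even (ndeg G y)) (hb : Even (ndeg G b))
    (h : ∀ w, HasPosEvenDegree G w → w = y ∨ w = b ∨ w = c) :
    HasPathDecomp G fun w => if w = y then 2 else if w = b then 0 else lovaszEnds G c w := by
  -- Both `y` and `b` are odd in `G - yb`; the path end at `b` is moved to `y`.
  have hdeg := ndeg_deleteEdges_add hyb
  have hpos : ∀ v, G.Adj y v → v ≠ y ∧ 0 < ndeg G v := fun v hv =>
    ⟨hv.ne', ndeg_pos_of_adj hv.symm⟩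
  refine (ih _ (deleteEdges_singleton_lt hyb) c c (by simp) (fun w hw => ?_) id).move_end
    hyb (fun v hv => ?_) fun v => ?_
  all_goals
    simp only [HasPosEvenDegree, lovaszEnds, Nat.even_iff] at *
    grind

theorem hasPathDecomp_of_common_neighbor (ih : ∀ H < G, LovaszDecomposable H)
    {u v w : V} (huw : G.Adj u w) (hwv : G.Adj w v) (hu : HasPosEvenDegree G u)
    (hv : HasPosEvenDegree G v) (huv : ¬G.Adj u v) (hne : u ≠ v)
    (h : ∀ x, HasPosEvenDegree G x → x = u ∨ x = v) :
    HasPathDecomp G (lovaszEnds G u) := by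
  -- In `G - uw` the vertex `w` is even and adjacent to `v`, so two paths can end at `w` and none at
  -- `v`; one of these ends is moved to `u`.
  have hwv' : (G.deleteEdges {s(u, w)}).Adj w v := by
    simp only [deleteEdges_adj, Set.mem_singleton_iff]
    grind
  have hdeg := ndeg_deleteEdges_add huw
  have hlt := deleteEdges_singleton_lt huw
  have hpos : ∀ x, G.Adj u x → x ≠ u ∧ x ≠ v ∧ 0 < ndeg G x := fun x hx =>
    ⟨hx.ne', fun hxv => huv (hxv ▸ hx), ndeg_pos_of_adj hx.symm⟩
  have hwne := hwv.ne
  refine (hasPathDecomp_of_even_adj (c := u) (fun H hH => ih H (hH.trans hlt)) hwv' ?_ ?_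
    fun x hx => ?_).move_end huw (fun x hx => ?_) fun x => ?_
  all_goals
    simp only [HasPosEvenDegree, lovaszEnds, Nat.even_iff] at *
    grind

theorem hasPathDecomp_of_two_posEven (ih : ∀ H < G, LovaszDecomposable H)
    {u v : V} (hu : HasPosEvenDegree G u) (hv : HasPosEvenDegree G v) (huv : ¬G.Adj u v)
    (hne : u ≠ v) (h : ∀ x, HasPosEvenDegree G x → x = u ∨ x = v) :
    HasPathDecomp G (lovaszEnds G u) := by
  obtain ⟨w, hvw⟩ := ndeg_pos_iff.1 hv.2
  by_cases huw : G.Adj u w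
  · exact hasPathDecomp_of_common_neighbor ih huw hvw.symm hu hv huv hne h
  have hdeg := ndeg_deleteEdges_add hvw.symm
  have hwu : w ≠ u := fun hwu => huv (hwu ▸ hvw.symm)
  have hpos : ∀ x, G.Adj w x → x ≠ w ∧ x ≠ u ∧ 0 < ndeg G x := fun x hx =>
    ⟨hx.ne', fun hxu => huw (hxu ▸ hx.symm), ndeg_pos_of_adj hx.symm⟩
  refine (ih _ (deleteEdges_singleton_lt hvw.symm) u w (fun hw => huw (deleteEdges_le _ hw))
    (fun x hx => ?_) fun hw => ?_).move_end hvw.symm (fun x hx => ?_) fun x => ?_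
  all_goals
    simp only [HasPosEvenDegree, lovaszEnds, Nat.even_iff] at *
    grind

theorem lovaszDecomposable (G : SimpleGraph V) : LovaszDecomposable G := by
  induction G using WellFoundedLT.induction with
  | ind G ih =>
    intro u v huv h hvu
    by_cases hv : HasPosEvenDegree G v ∧ u ≠ v
    · exact hasPathDecomp_of_two_posEven ih (hvu hv.1) hv.1 huv hv.2 h
    · exact hasPathDecomp_of_unique_posEven ih fun w hw => (h w hw).elim id fun hwv => by grind

end Lovasz

section Attach

theorem ndeg_induce {G : SimpleGraph V} {s : Set V} {v : V} (hv : v ∈ s)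
    (h : ∀ w, G.Adj v w → w ∈ s) : ndeg (G.induce s) ⟨v, hv⟩ = ndeg G v :=
  Set.ncard_preimage_of_injective_subset_range Subtype.val_injective
    fun w hw => ⟨⟨w, h w hw⟩, rfl⟩

variable {K : SimpleGraph V} {x y z : V}

theorem deleteEdges_deleteEdges_adj (hnbr : K.neighborSet z = {x, y}) (v w : V) :
    ((K.deleteEdges {s(z, x)}).deleteEdges {s(z, y)}).Adj v w ↔ K.Adj v w ∧ v ≠ z ∧ w ≠ z := by
  have hz : ∀ v, K.Adj z v ↔ v = x ∨ v = y := fun v => Set.ext_iff.1 hnbr v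
  simp only [deleteEdges_adj, Set.mem_singleton_iff, Sym2.eq_iff]
  grind [K.adj_comm]

theorem ndeg_deleteEdges_deleteEdges (hnbr : K.neighborSet z = {x, y}) {v : V} (hv : v ≠ z) :
    ndeg ((K.deleteEdges {s(z, x)}).deleteEdges {s(z, y)}) v =
      ndeg (K.induce {v | v ≠ z}) ⟨v, hv⟩ := by
  have hadj := deleteEdges_deleteEdges_adj hnbr
  rw [← ndeg_induce hv fun w hw => ((hadj v w).1 hw).2.2]
  congr 1
  ext a b
  rw [comap_adj, comap_adj, hadj]
  exact and_iff_left ⟨a.2, b.2⟩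

variable [DecidableEq V] {f g : V → ℕ}

theorem HasPathDecomp.attach
    (h : HasPathDecomp ((K.deleteEdges {s(z, x)}).deleteEdges {s(z, y)}) f) (hxy : x ≠ y)
    (hnbr : K.neighborSet z = {x, y}) (hx : 0 < f x) (hy : 1 < f y)
    (hg : ∀ v, g v + (if v = x ∨ v = y then 1 else 0) = f v + if v = z then 2 else 0) :
    HasPathDecomp K g := by
  have hz : ∀ v, K.Adj z v ↔ v = x ∨ v = y := fun v => Set.ext_iff.1 hnbr v
  have hzx : K.Adj z x := (hz x).2 (.inl rfl)
  have hxz : x ≠ z := hzx.ne'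
  have hyz : y ≠ z := ((hz y).2 (.inr rfl)).ne'
  have hzy : (K.deleteEdges {s(z, x)}).Adj z y := by
    simp only [deleteEdges_adj, hz, Set.mem_singleton_iff, Sym2.eq_iff]
    grind
  have hzy_move : HasPathDecomp (K.deleteEdges {s(z, x)})
      fun v => if v = z then f v + 1 else if v = y then f v - 1 else f v := by
    refine h.move_end hzy (fun v hv => ?_) fun v => ?_
    · simp only [deleteEdges_adj, hz, Set.mem_singleton_iff, Sym2.eq_iff] at hv
      grind
    · grind
  refine hzy_move.move_end hzx (fun v hv => ?_) fun v => ?_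
  · have := (hz v).1 hv
    grind
  · grind

theorem exists_hasPathDecomp_attach [Finite V] {b c : V} (hcz : c ≠ z)
    (hnbr : K.neighborSet z = {x, y}) {H : SimpleGraph V}
    (hH : H = (K.deleteEdges {s(z, x)}).deleteEdges {s(z, y)}) (hyb : H.Adj y b)
    (hx : Odd (ndeg H x)) (hy : Even (ndeg H y)) (hb : Even (ndeg H b))
    (h : ∀ w, HasPosEvenDegree H w → w = y ∨ w = b ∨ w = c) :
    ∃ g, HasPathDecomp K g ∧ g z = 2 ∧ ∀ v, g v + (if v = b then 1 else 0) +
      (if v = x then 1 else 0) ≤ 1 + (if v = c then 1 else 0) + if v = z then 1 else 0 := by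
  have hadj : ∀ v w, H.Adj v w ↔ K.Adj v w ∧ v ≠ z ∧ w ≠ z :=
    hH ▸ deleteEdges_deleteEdges_adj hnbr
  have hHz : ndeg H z = 0 := by simp [ndeg, hadj]
  obtain ⟨-, hyz, hbz⟩ := (hadj y b).1 hyb
  have hxz : x ≠ z := fun hxz => by simp [hxz, hHz] at hx
  have hP := hasPathDecomp_of_even_adj (fun G _ => lovaszDecomposable G) hyb hy hb h
  have hne := hyb.ne
  refine ⟨fun v => if v = z then 2 else if v = y then 1 else if v = b ∨ v = x then 0 else
    lovaszEnds H c v, (hH ▸ hP).attach ?_ hnbr ?_ ?_ fun v => ?_, if_pos rfl, fun v => ?_⟩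
  all_goals grind [lovaszEnds]

end Attach

theorem eset_type_ii_special_decomposition_general [Fintype V] [DecidableEq V]
    (K : SimpleGraph V) (z x y : V) (hxz : x ≠ z) (hyz : y ≠ z)
    (hnbr : K.neighborSet z = {x, y}) (b c : {v | v ≠ z})
    (hyb : (K.induce {v | v ≠ z}).Adj ⟨y, hyz⟩ b)
    (hx : Odd (ndeg (K.induce {v | v ≠ z}) ⟨x, hxz⟩))
    (hy : Even (ndeg (K.induce {v | v ≠ z}) ⟨y, hyz⟩))
    (hb : Even (ndeg (K.induce {v | v ≠ z}) b))
    (heven : ∀ v, Even (ndeg (K.induce {v | v ≠ z}) v) → v = ⟨y, hyz⟩ ∨ v = b ∨ v = c) :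
    ∃ D : PathDecomp K, 2 ≤ ends D z ∧ 2 * pdCard D ≤ Fintype.card V := by
  obtain ⟨b, hbz⟩ := b
  obtain ⟨c, hcz⟩ := c
  have hadj := deleteEdges_deleteEdges_adj hnbr
  rw [← ndeg_deleteEdges_deleteEdges hnbr] at hx hy hb
  obtain ⟨g, hg, hgz, hgle⟩ := exists_hasPathDecomp_attach hcz hnbr rfl
    ((hadj y b).2 ⟨hyb, hyz, hbz⟩) hx hy hb fun w hw => by
      obtain ⟨v, hwv⟩ := ndeg_pos_iff.1 hw.2
      have hwz := ((hadj w v).1 hwv).2.1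
      rw [HasPosEvenDegree, ndeg_deleteEdges_deleteEdges hnbr hwz] at hw
      simpa only [Subtype.mk.injEq] using heven ⟨w, hwz⟩ hw.1
  obtain ⟨D, hends, hcard⟩ := hg.exists_pathDecomp
  have hsum := Finset.sum_le_sum fun v (_ : v ∈ Finset.univ) => hgle v
  simp only [Finset.sum_add_distrib, Finset.sum_ite_eq', Finset.mem_univ, if_true,
    Finset.sum_const, Finset.card_univ, smul_eq_mul, mul_one] at hsum
  exact ⟨D, by rw [hends, hgz], by omega⟩

theorem IsSETGraph.exists_adj_even {G : SimpleGraph V} (hG : IsSETGraph G) {y : V}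
    (hy : Even (ndeg G y)) :
    ∃ b c, G.Adj y b ∧ Even (ndeg G b) ∧ ∀ v, Even (ndeg G v) → v = y ∨ v = b ∨ v = c := by
  obtain ⟨⟨p, q, r, -, -, -, heven, hpq, hpr, hqr⟩, -⟩ := hG
  have hmem : ∀ v, Even (ndeg G v) ↔ v = p ∨ v = q ∨ v = r := fun v => Set.ext_iff.1 heven v
  rcases (hmem y).1 hy with rfl | rfl | rfl
  · exact ⟨q, r, hpq, by grind⟩
  · exact ⟨p, r, hpq.symm, by grind⟩
  · exact ⟨p, q, hpr.symm, by grind⟩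

theorem eset_type_ii_special_decomposition [Fintype V] [DecidableEq V]
    (K : SimpleGraph V) (z x y : V) (hxz : x ≠ z) (hyz : y ≠ z)
    (hnbr : K.neighborSet z = {x, y})
    (hSET : IsSETGraph (K.induce {v | v ≠ z}))
    (hx : Odd (ndeg (K.induce {v | v ≠ z}) ⟨x, hxz⟩))
    (hy : Even (ndeg (K.induce {v | v ≠ z}) ⟨y, hyz⟩)) :
    ∃ D : PathDecomp K, 2 ≤ ends D z ∧ pdCard D ≤ (Fintype.card V + 1) / 2 := by
  obtain ⟨b, c, hyb, hb, heven⟩ := hSET.exists_adj_even hy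
  obtain ⟨D, hz, hcard⟩ := eset_type_ii_special_decomposition_general K z x y hxz hyz hnbr b c hyb
    hx hy hb heven
  exact ⟨D, hz, by omega⟩
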